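/- Let t_{n,k} denote the number of α-equivalence classes of linear lambda terms with n total applications and abstractions and k free variables. Then t_{0,k} = 1 if k = 1 and t_{0,k} = 0 otherwise, and for all n ≥ 0 and k ≥ 0: t_{n+1,k} = Σ_{n₁+n₂=n} Σ_{k₁+k₂=k} binomial(k,k₁)·t_{n₁,k₁}·t_{n₂,k₂} + t_{n,k+1}. Equivalently, the exponential-type generating function L(z,x) = Σ_{n,k} t_{n,k} x^k z^n / k! satisfies L(z,x) = x + z·L(z,x)² + z·∂L/∂x(z,x). -/

import Mathlib

/-! ## Lambda terms and linearity -/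

inductive Term : Type
  | var : ℕ → Term
  | app : Term → Term → Term
  | lam : ℕ → Term → Term
deriving DecidableEq

namespace Term

/-- total number of applications and abstractions -/
def size : Term → ℕ
  | var _ => 0
  | app t u => size t + size u + 1
  | lam _ t => size t + 1

def apps : Term → ℕ
  | var _ => 0
  | app t u => apps t + apps u + 1
  | lam _ t => apps t

def lams : Term → ℕ
  | var _ => 0
  | app t u => lams t + lams u
  | lam _ t => lams t + 1

/-- all variable names occurring in a term (free, bound or binding) -/
def varsList : Term → List ℕ
  | var z => [z]
  | app t u => varsList t ++ varsList u
  | lam z t => z :: varsList t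

/-- the list of free variables -/
def freeList : Term → List ℕ
  | var z => [z]
  | app t u => freeList t ++ freeList u
  | lam z t => (freeList t).filter (fun y => y ≠ z)

/-- the list of bound (binder) variables -/
def boundVars : Term → List ℕ
  | var _ => []
  | app t u => boundVars t ++ boundVars u
  | lam z t => z :: boundVars t

/-- rename the free occurrences of `x` to `y` -/
def rename (x y : ℕ) : Term → Term
  | var z => if z = x then var y else var z
  | app t u => app (rename x y t) (rename x y u)
  | lam z t => if z = x then lam z t else lam z (rename x y t)

/-- substitution of `u` for the free occurrences of `x` -/
def subst (u : Term) (x : ℕ) : Term → Term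
  | var z => if z = x then u else var z
  | app t₁ t₂ => app (subst u x t₁) (subst u x t₂)
  | lam z t => if z = x then lam z t else lam z (subst u x t)

end Term

/-- the linearity relation `Γ ⊢ t` between contexts and lambda terms -/
inductive Linear : List ℕ → Term → Prop
  | var (x : ℕ) : Linear [x] (.var x)
  | app {Γ Δ : List ℕ} {t u : Term} : Linear Γ t → Linear Δ u →
      (Γ ++ Δ).Nodup → Linear (Γ ++ Δ) (.app t u)
  | lam {Γ : List ℕ} {x : ℕ} {t : Term} : Linear (Γ ++ [x]) t → Linear Γ (.lam x t)
  | exch {Γ Δ : List ℕ} {x y : ℕ} {t : Term} :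
      Linear (Γ ++ y :: x :: Δ) t → Linear (Γ ++ x :: y :: Δ) t

/-! ## Alpha equivalence -/

/-- change of a bound variable somewhere inside a term -/
inductive BoundStep : Term → Term → Prop
  | here {x y : ℕ} {u : Term} : y ∉ u.varsList →
      BoundStep (.lam x u) (.lam y (u.rename x y))
  | appL {t t' u : Term} : BoundStep t t' → BoundStep (.app t u) (.app t' u)
  | appR {t u u' : Term} : BoundStep u u' → BoundStep (.app t u) (.app t u')
  | lam {x : ℕ} {t t' : Term} : BoundStep t t' → BoundStep (.lam x t) (.lam x t')

/-- a single change of a free or bound variable -/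
inductive AlphaStep : List ℕ × Term → List ℕ × Term → Prop
  | free {Γ₁ Γ₂ : List ℕ} {x y : ℕ} {t : Term} :
      y ∉ t.varsList → y ∉ Γ₁ → y ∉ Γ₂ →
      AlphaStep (Γ₁ ++ x :: Γ₂, t) (Γ₁ ++ y :: Γ₂, t.rename x y)
  | bound {Γ : List ℕ} {t t' : Term} : BoundStep t t' → AlphaStep (Γ, t) (Γ, t')

/-- alpha equivalence of linear lambda terms-in-context -/
def Alpha : List ℕ × Term → List ℕ × Term → Prop := Relation.EqvGen AlphaStep


/-- `tnk n k` is the number of alpha-equivalence classes of linear lambda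
terms with `n` total applications and abstractions and `k` free variables -/
noncomputable def tnk (n k : ℕ) : ℕ :=
  Nat.card (Quot (fun a b :
    {p : List ℕ × Term // Linear p.1 p.2 ∧ Term.size p.2 = n ∧ p.1.length = k} =>
      Alpha a.val b.val))

/-!
Replacing names by de Bruijn indices, with the names of the context numbered from `0`, turns the
`Alpha`-classes of linear terms with `k` free variables into the nameless linear terms whose set
of free indices is `{0, …, k - 1}`. Such a term of positive size is either an application, which
splits the free indices between its two parts and gives the binomial convolution, or an
abstraction, whose body has one more free index. The number of nameless linear terms of a given
size depends only on how many free indices there are, so the count closes up into a recurrence.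
-/

/-! ## Counting nameless linear terms -/

/-- Nameless lambda terms: de Bruijn indices replace names, an index `i` under `m` binders being
free when `m ≤ i`, in which case it stands for the free index `i - m`. -/
inductive DeBruijn : Type
  | var : ℕ → DeBruijn
  | app : DeBruijn → DeBruijn → DeBruijn
  | lam : DeBruijn → DeBruijn

namespace DeBruijn

/-- Total number of applications and abstractions, as in `Term.size`. -/
def size : DeBruijn → ℕ
  | var _ => 0
  | app d₁ d₂ => d₁.size + d₂.size + 1
  | lam d => d.size + 1

/-- The free indices of the body of an abstraction that binds a variable and has free indices
`S`. -/
def bindIndices (S : Finset ℕ) : Finset ℕ := insert 0 (S.image Nat.succ)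

/-- `d.IsLinear S`: every binder of `d` binds exactly one occurrence, and `S` is the set of free
indices of `d`, each occurring once. -/
inductive IsLinear : DeBruijn → Finset ℕ → Prop
  | var (i : ℕ) : IsLinear (.var i) {i}
  | app {d₁ d₂ : DeBruijn} {A B : Finset ℕ} : Disjoint A B → IsLinear d₁ A → IsLinear d₂ B →
      IsLinear (.app d₁ d₂) (A ∪ B)
  | lam {d : DeBruijn} {S : Finset ℕ} : IsLinear d (bindIndices S) → IsLinear (.lam d) S

theorem card_bindIndices (S : Finset ℕ) : (bindIndices S).card = S.card + 1 := by
  rw [bindIndices, Finset.card_insert_of_notMem (by simp),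
    Finset.card_image_of_injective _ Nat.succ_injective]

theorem bindIndices_range (k : ℕ) : bindIndices (Finset.range k) = Finset.range (k + 1) := by
  rw [bindIndices, Finset.range_add_one', Finset.map_eq_image]
  rfl

theorem bindIndices_injective : Function.Injective bindIndices := by
  intro A B h
  ext a
  simpa [bindIndices] using congrArg (a + 1 ∈ ·) h

theorem isLinear_var_iff {i : ℕ} {S : Finset ℕ} : (var i).IsLinear S ↔ S = {i} :=
  ⟨fun h => by cases h; rfl, fun h => h ▸ .var i⟩

theorem isLinear_app_iff {d₁ d₂ : DeBruijn} {S : Finset ℕ} :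
    (app d₁ d₂).IsLinear S ↔ ∃ A ⊆ S, d₁.IsLinear A ∧ d₂.IsLinear (S \ A) := by
  constructor
  · rintro (_ | ⟨hAB, h₁, h₂⟩)
    exact ⟨_, Finset.subset_union_left, h₁, by rwa [Finset.union_sdiff_cancel_left hAB]⟩
  · rintro ⟨A, hA, h₁, h₂⟩
    simpa only [Finset.union_sdiff_of_subset hA] using IsLinear.app Finset.disjoint_sdiff h₁ h₂

theorem isLinear_lam_iff {d : DeBruijn} {S : Finset ℕ} :
    (lam d).IsLinear S ↔ d.IsLinear (bindIndices S) :=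
  ⟨fun h => by cases h; assumption, .lam⟩

theorem IsLinear.unique {d : DeBruijn} {S T : Finset ℕ} (hS : d.IsLinear S)
    (hT : d.IsLinear T) : S = T := by
  induction hS generalizing T with
  | var i => exact (isLinear_var_iff.mp hT).symm
  | app _ _ _ ih₁ ih₂ =>
    cases hT with
    | app _ h₁ h₂ => rw [ih₁ h₁, ih₂ h₂]
  | lam _ ih => exact bindIndices_injective (ih (isLinear_lam_iff.mp hT))

/-- The nameless linear terms of size `n` with set of free indices `S`. -/
def linearTerms (n : ℕ) (S : Finset ℕ) : Set DeBruijn :=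
  {d | d.size = n ∧ d.IsLinear S}

theorem linearTerms_zero (S : Finset ℕ) : linearTerms 0 S = var '' {i | S = {i}} := by
  ext d
  cases d <;> simp [linearTerms, size, isLinear_var_iff]

theorem ncard_linearTerms_zero (S : Finset ℕ) :
    (linearTerms 0 S).ncard = if S.card = 1 then 1 else 0 := by
  rw [linearTerms_zero, Set.ncard_image_of_injective _ fun _ _ => var.inj]
  split_ifs with hS
  · obtain ⟨a, rfl⟩ := Finset.card_eq_one.mp hS
    simp
  · have hne (i : ℕ) : S ≠ {i} := fun h => hS (h ▸ Finset.card_singleton i)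
    simp [hne]

/-- The applications of size `n + 1` with free indices `S` whose function part has size `p.1 ≤ n`
and free indices `p.2 ⊆ S`. -/
def linearApps (n : ℕ) (S : Finset ℕ) (p : ℕ × Finset ℕ) : Set DeBruijn :=
  (fun d => app d.1 d.2) '' linearTerms p.1 p.2 ×ˢ linearTerms (n - p.1) (S \ p.2)

theorem linearTerms_succ (n : ℕ) (S : Finset ℕ) :
    linearTerms (n + 1) S =
      (⋃ p ∈ Finset.range (n + 1) ×ˢ S.powerset, linearApps n S p) ∪
        lam '' linearTerms n (bindIndices S) := by
  ext d
  cases d with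
  | var i => simp [linearTerms, linearApps, size]
  | lam d => simp [linearTerms, linearApps, size, isLinear_lam_iff]
  | app d₁ d₂ =>
    suffices d₁.size + d₂.size = n ∧ (∃ A ⊆ S, d₁.IsLinear A ∧ d₂.IsLinear (S \ A)) ↔
        ∃ A, d₁.IsLinear A ∧ d₂.size = n - d₁.size ∧ (d₁.size ≤ n ∧ A ⊆ S) ∧
          d₂.IsLinear (S \ A) by
      simpa [linearTerms, linearApps, size, isLinear_app_iff] using this
    constructor
    · rintro ⟨hsize, A, hA, h₁, h₂⟩
      exact ⟨A, h₁, by omega, ⟨by omega, hA⟩, h₂⟩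
    · rintro ⟨A, h₁, hsize, ⟨hle, hA⟩, h₂⟩
      exact ⟨by omega, A, hA, h₁, h₂⟩

theorem finite_linearTerms (n : ℕ) (S : Finset ℕ) : (linearTerms n S).Finite := by
  induction n using Nat.strong_induction_on generalizing S with
  | _ n ih =>
    cases n with
    | zero =>
      rw [linearTerms_zero]
      exact .image _ (Set.Subsingleton.finite fun _ hi _ hj =>
        Finset.singleton_injective (hi.symm.trans hj))
    | succ n =>
      rw [linearTerms_succ]
      refine .union (.biUnion (Finset.finite_toSet _) fun p hp => ?_) (.image _ (ih n (by omega) _))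
      have hp' := Finset.mem_range.mp (Finset.mem_product.mp hp).1
      exact .image _ (.prod (ih _ hp' _) (ih _ (by omega) _))

theorem pairwise_disjoint_linearApps (n : ℕ) (S : Finset ℕ) :
    Pairwise (Function.onFun Disjoint (linearApps n S)) := by
  intro p q hpq
  refine Set.disjoint_left.mpr ?_
  rintro _ ⟨⟨d₁, d₂⟩, ⟨⟨hsize, hlin⟩, -⟩, rfl⟩ ⟨⟨d₁', d₂'⟩, ⟨⟨hsize', hlin'⟩, -⟩, heq⟩
  obtain ⟨rfl, -⟩ := app.inj heq
  exact hpq (Prod.ext (hsize.symm.trans hsize') (hlin.unique hlin'))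

theorem ncard_linearApps (n : ℕ) (S : Finset ℕ) (p : ℕ × Finset ℕ) :
    (linearApps n S p).ncard =
      (linearTerms p.1 p.2).ncard * (linearTerms (n - p.1) (S \ p.2)).ncard := by
  rw [linearApps, Set.ncard_image_of_injective _ fun _ _ h => Prod.ext (app.inj h).1 (app.inj h).2,
    Set.ncard_prod]

theorem ncard_linearTerms_succ (n : ℕ) (S : Finset ℕ) :
    (linearTerms (n + 1) S).ncard =
      (∑ i ∈ Finset.range (n + 1), ∑ A ∈ S.powerset,
        (linearTerms i A).ncard * (linearTerms (n - i) (S \ A)).ncard) +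
      (linearTerms n (bindIndices S)).ncard := by
  have hfin := linearTerms_succ n S ▸ finite_linearTerms (n + 1) S
  have hdisj : Disjoint (⋃ p ∈ Finset.range (n + 1) ×ˢ S.powerset, linearApps n S p)
      (lam '' linearTerms n (bindIndices S)) := by
    refine Set.disjoint_left.mpr ?_
    rintro _ happ ⟨_, -, rfl⟩
    simp [linearApps] at happ
  rw [linearTerms_succ, Set.ncard_union_eq hdisj (hfin.subset Set.subset_union_left)
    (hfin.subset Set.subset_union_right), Set.ncard_image_of_injective _ fun _ _ => lam.inj,
    ← Finset.sum_product', ← finsum_mem_coe_finset]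
  simp only [← ncard_linearApps n S]
  congr 1
  exact (Finset.finite_toSet _).ncard_biUnion
    (fun p hp => hfin.subset (Set.subset_union_of_subset_left (Set.subset_biUnion_of_mem hp) _))
    fun _ _ _ _ hpq => pairwise_disjoint_linearApps n S hpq

theorem ncard_linearTerms_succ_of_card {n : ℕ} {f : ℕ → ℕ → ℕ}
    (hf : ∀ m ≤ n, ∀ A, (linearTerms m A).ncard = f m A.card) (S : Finset ℕ) :
    (linearTerms (n + 1) S).ncard =
      (∑ i ∈ Finset.range (n + 1), ∑ j ∈ Finset.range (S.card + 1),
        S.card.choose j * f i j * f (n - i) (S.card - j)) + f n (S.card + 1) := by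
  rw [ncard_linearTerms_succ, hf n le_rfl, card_bindIndices]
  congr 1
  refine Finset.sum_congr rfl fun i hi => ?_
  have hi' : i ≤ n := Finset.mem_range_succ_iff.mp hi
  calc ∑ A ∈ S.powerset, (linearTerms i A).ncard * (linearTerms (n - i) (S \ A)).ncard
      = ∑ A ∈ S.powerset, f i A.card * f (n - i) (S.card - A.card) :=
        Finset.sum_congr rfl fun A hA => by
          rw [hf i hi', hf _ (n.sub_le i), Finset.card_sdiff_of_subset (Finset.mem_powerset.mp hA)]
    _ = ∑ j ∈ Finset.range (S.card + 1), S.card.choose j * f i j * f (n - i) (S.card - j) := by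
        rw [Finset.sum_powerset_apply_card fun j => f i j * f (n - i) (S.card - j)]
        simp only [smul_eq_mul, mul_assoc]

/-- The number of nameless linear terms of size `n` with free indices `0, …, k - 1`. -/
noncomputable def linearCount (n k : ℕ) : ℕ := (linearTerms n (Finset.range k)).ncard

theorem ncard_linearTerms (n : ℕ) (S : Finset ℕ) :
    (linearTerms n S).ncard = linearCount n S.card := by
  induction n using Nat.strong_induction_on generalizing S with
  | _ n ih =>
    cases n with
    | zero => simp only [linearCount, ncard_linearTerms_zero, Finset.card_range]
    | succ n =>
      have ih' : ∀ m ≤ n, ∀ A, (linearTerms m A).ncard = linearCount m A.card :=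
        fun m hm => ih m (Nat.lt_succ_of_le hm)
      rw [linearCount, ncard_linearTerms_succ_of_card ih', ncard_linearTerms_succ_of_card ih',
        Finset.card_range]

theorem linearCount_zero (k : ℕ) : linearCount 0 k = if k = 1 then 1 else 0 := by
  rw [linearCount, ncard_linearTerms_zero, Finset.card_range]

theorem linearCount_succ (n k : ℕ) :
    linearCount (n + 1) k =
      (∑ i ∈ Finset.range (n + 1), ∑ j ∈ Finset.range (k + 1),
        k.choose j * linearCount i j * linearCount (n - i) (k - j)) + linearCount n (k + 1) := by
  rw [linearCount, ncard_linearTerms_succ_of_card fun m _ => ncard_linearTerms m,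
    Finset.card_range]

end DeBruijn

/-! ## Nameless forms and alpha equivalence -/

/-- The environment, assigning de Bruijn indices to names, under a binder of `x` in the
environment `e`. -/
def bindEnv (x : ℕ) (e : ℕ → ℕ) : ℕ → ℕ := fun z => if z = x then 0 else e z + 1

theorem bindEnv_self (x : ℕ) (e : ℕ → ℕ) : bindEnv x e x = 0 := if_pos rfl

theorem bindEnv_of_ne {x z : ℕ} (h : z ≠ x) (e : ℕ → ℕ) : bindEnv x e z = e z + 1 := if_neg h

theorem bindEnv_injective {e : ℕ → ℕ} (he : e.Injective) (x : ℕ) : (bindEnv x e).Injective := by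
  intro a b h
  by_cases ha : a = x <;> by_cases hb : b = x <;> simp_all [bindEnv, he.eq_iff]

theorem bindEnv_update_of_ne {w x y : ℕ} (hx : w ≠ x) (hy : y ≠ w) (e : ℕ → ℕ) :
    bindEnv w (Function.update e x (e y)) =
      Function.update (bindEnv w e) x (bindEnv w e y) := by
  funext z
  grind [bindEnv, Function.update_apply]

theorem bindEnv_update_self (x v : ℕ) (e : ℕ → ℕ) :
    bindEnv x (Function.update e x v) = bindEnv x e := by
  funext z
  grind [bindEnv, Function.update_apply]

theorem image_bindEnv_insert {x : ℕ} {S : Finset ℕ} (hx : x ∉ S) (e : ℕ → ℕ) :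
    (insert x S).image (bindEnv x e) = DeBruijn.bindIndices (S.image e) := by
  rw [Finset.image_insert, bindEnv_self, DeBruijn.bindIndices, Finset.image_image]
  exact congrArg _ (Finset.image_congr fun z hz => bindEnv_of_ne (ne_of_mem_of_not_mem hz hx) e)

/-- The environment of a context: the `i`-th name of `Γ` gets index `i`. Names outside `Γ` get
indices from `Γ.length` on, which keeps the environment injective. -/
def contextEnv (Γ : List ℕ) : ℕ → ℕ := Γ.foldr bindEnv id

theorem contextEnv_cons (x : ℕ) (Γ : List ℕ) : contextEnv (x :: Γ) = bindEnv x (contextEnv Γ) :=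
  rfl

theorem contextEnv_injective (Γ : List ℕ) : (contextEnv Γ).Injective := by
  induction Γ with
  | nil => exact Function.injective_id
  | cons x Γ ih => exact bindEnv_injective ih x

theorem image_contextEnv {Γ : List ℕ} (hΓ : Γ.Nodup) :
    Γ.toFinset.image (contextEnv Γ) = Finset.range Γ.length := by
  induction Γ with
  | nil => rfl
  | cons x Γ ih =>
    obtain ⟨hx, hΓ⟩ := List.nodup_cons.mp hΓ
    rw [List.toFinset_cons, contextEnv_cons, image_bindEnv_insert (by simpa using hx), ih hΓ,
      DeBruijn.bindIndices_range, List.length_cons]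

theorem contextEnv_replace {Γ₁ : List ℕ} {x y z : ℕ} (hx : x ∉ Γ₁) (hy : y ∉ Γ₁) (hz : z ≠ y)
    (Γ₂ : List ℕ) :
    Function.update (contextEnv (Γ₁ ++ y :: Γ₂)) x (contextEnv (Γ₁ ++ y :: Γ₂) y) z =
      contextEnv (Γ₁ ++ x :: Γ₂) z := by
  induction Γ₁ with
  | nil =>
    simp only [List.nil_append, contextEnv_cons, Function.update_apply, bindEnv, hz]
    rfl
  | cons w Γ₁ ih =>
    rw [List.mem_cons, not_or] at hx hy
    obtain ⟨hxw, hx⟩ := hx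
    obtain ⟨hyw, hy⟩ := hy
    rw [List.cons_append, List.cons_append, contextEnv_cons, contextEnv_cons,
      ← bindEnv_update_of_ne (Ne.symm hxw) hyw, bindEnv, bindEnv, ih hx hy]

namespace Term

/-- The nameless form of a term whose free variables get their indices from the environment
`e`. -/
def toDeBruijn (e : ℕ → ℕ) : Term → DeBruijn
  | var x => .var (e x)
  | app t u => .app (t.toDeBruijn e) (u.toDeBruijn e)
  | lam x t => .lam (t.toDeBruijn (bindEnv x e))

theorem size_toDeBruijn (e : ℕ → ℕ) (t : Term) : (t.toDeBruijn e).size = t.size := by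
  induction t generalizing e with
  | var x => rfl
  | app t u iht ihu => simp only [toDeBruijn, DeBruijn.size, size, iht, ihu]
  | lam x t ih => simp only [toDeBruijn, DeBruijn.size, size, ih]

theorem size_rename (x y : ℕ) (t : Term) : (t.rename x y).size = t.size := by
  induction t with
  | var z => simp only [rename]; split_ifs <;> rfl
  | app t u iht ihu => simp only [rename, size, iht, ihu]
  | lam w t ih => simp only [rename]; split_ifs <;> simp only [size, ih]

theorem varsList_rename_subset (x y : ℕ) (t : Term) :
    (t.rename x y).varsList ⊆ y :: t.varsList := by
  induction t with
  | var z => simp only [rename]; split_ifs <;> simp [varsList]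
  | app t u iht ihu => simp only [rename, varsList]; grind
  | lam w t ih => simp only [rename]; split_ifs <;> simp only [varsList] <;> grind

theorem toDeBruijn_congr {t : Term} {e e' : ℕ → ℕ} (h : ∀ z ∈ t.varsList, e z = e' z) :
    t.toDeBruijn e = t.toDeBruijn e' := by
  induction t generalizing e e' with
  | var x => simp only [toDeBruijn, h x (List.mem_singleton_self x)]
  | app t u iht ihu =>
    simp only [toDeBruijn, iht fun z hz => h z (List.mem_append_left _ hz),
      ihu fun z hz => h z (List.mem_append_right _ hz)]
  | lam x t ih =>
    have h' : ∀ z ∈ t.varsList, bindEnv x e z = bindEnv x e' z := fun z hz => by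
      simp only [bindEnv, h z (List.mem_cons_of_mem x hz)]
    simp only [toDeBruijn, ih h']

theorem toDeBruijn_rename {x y : ℕ} {t : Term} (hy : y ∉ t.varsList) (e : ℕ → ℕ) :
    (t.rename x y).toDeBruijn e = t.toDeBruijn (Function.update e x (e y)) := by
  induction t generalizing e with
  | var z => simp only [rename]; split_ifs with hz <;> simp [toDeBruijn, hz]
  | app t u iht ihu =>
    rw [varsList, List.mem_append, not_or] at hy
    obtain ⟨ht, hu⟩ := hy
    simp only [rename, toDeBruijn, iht ht, ihu hu]
  | lam w t ih =>
    rw [varsList, List.mem_cons, not_or] at hy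
    obtain ⟨hyw, ht⟩ := hy
    simp only [rename]
    split_ifs with hw
    · subst hw
      simp only [toDeBruijn, bindEnv_update_self]
    · simp only [toDeBruijn, ih ht, bindEnv_update_of_ne hw hyw]

theorem toDeBruijn_lam_rename {x y : ℕ} {t : Term} (hy : y ∉ t.varsList) (e : ℕ → ℕ) :
    (lam y (t.rename x y)).toDeBruijn e = (lam x t).toDeBruijn e := by
  rw [toDeBruijn, toDeBruijn, toDeBruijn_rename hy]
  refine congrArg _ (toDeBruijn_congr fun z hz => ?_)
  have hzy : z ≠ y := ne_of_mem_of_not_mem hz hy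
  grind [bindEnv, Function.update_apply]

theorem coe_subset_range_of_isLinear_toDeBruijn {t : Term} {e : ℕ → ℕ} {S : Finset ℕ}
    (h : (t.toDeBruijn e).IsLinear S) : (S : Set ℕ) ⊆ Set.range e := by
  induction t generalizing e S with
  | var x => simp [DeBruijn.isLinear_var_iff.mp h]
  | app t u iht ihu =>
    cases h with
    | app _ ht hu =>
      rw [Finset.coe_union]
      exact Set.union_subset (iht ht) (ihu hu)
  | lam x t ih =>
    intro a ha
    obtain ⟨z, hz⟩ := ih (DeBruijn.isLinear_lam_iff.mp h) (by
      simpa [DeBruijn.bindIndices] using ha : a + 1 ∈ (DeBruijn.bindIndices S : Set ℕ))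
    have hzx : z ≠ x := by
      rintro rfl
      simp [bindEnv_self] at hz
    exact ⟨z, by simpa [bindEnv_of_ne hzx] using hz⟩

theorem exists_toDeBruijn_eq {d : DeBruijn} {e : ℕ → ℕ} {S : Finset ℕ}
    (h : d.IsLinear (S.image e)) : ∃ t : Term, t.toDeBruijn e = d := by
  induction d generalizing e S with
  | var i =>
    have hi : i ∈ S.image e := DeBruijn.isLinear_var_iff.mp h ▸ Finset.mem_singleton_self i
    obtain ⟨x, -, hx⟩ := Finset.mem_image.mp hi
    exact ⟨var x, congrArg _ hx⟩
  | app d₁ d₂ ih₁ ih₂ =>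
    obtain ⟨A, hA, h₁, h₂⟩ := DeBruijn.isLinear_app_iff.mp h
    obtain ⟨A, -, rfl⟩ := Finset.subset_image_iff.mp hA
    obtain ⟨B, -, hB⟩ := Finset.subset_image_iff.mp (Finset.sdiff_subset (s := S.image e))
    obtain ⟨t, rfl⟩ := ih₁ h₁
    obtain ⟨u, rfl⟩ := ih₂ (hB ▸ h₂)
    exact ⟨app t u, rfl⟩
  | lam d ih =>
    obtain ⟨x, hx⟩ := Infinite.exists_notMem_finset S
    rw [DeBruijn.isLinear_lam_iff, ← image_bindEnv_insert hx] at h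
    obtain ⟨t, rfl⟩ := ih h
    exact ⟨lam x t, rfl⟩

end Term

namespace Linear

theorem perm {Γ Δ : List ℕ} {t : Term} (h : Linear Γ t) (hp : Γ.Perm Δ) : Linear Δ t := by
  suffices h_append : ∀ Θ, Linear (Θ ++ Γ) t → Linear (Θ ++ Δ) t from h_append [] h
  clear h
  induction hp with
  | nil => exact fun _ => id
  | cons a _ ih => exact fun Θ hΘ => by simpa using ih (Θ ++ [a]) (by simpa using hΘ)
  | swap a b _ => exact fun _ => exch
  | trans _ _ ih₁ ih₂ => exact fun Θ hΘ => ih₂ Θ (ih₁ Θ hΘ)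

theorem nodup {Γ : List ℕ} {t : Term} (h : Linear Γ t) : Γ.Nodup := by
  induction h with
  | var x => exact List.nodup_singleton x
  | app _ _ hΓΔ _ _ => exact hΓΔ
  | lam _ ih => exact ih.of_append_left
  | exch _ ih => exact ((List.Perm.swap _ _ _).append_left _).nodup_iff.mp ih

theorem isLinear_toDeBruijn {Γ : List ℕ} {t : Term} (h : Linear Γ t) {e : ℕ → ℕ}
    (he : e.Injective) : (t.toDeBruijn e).IsLinear (Γ.toFinset.image e) := by
  induction h generalizing e with
  | var x => simpa [Term.toDeBruijn] using DeBruijn.IsLinear.var (e x)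
  | app _ _ hΓΔ iht ihu =>
    rw [List.toFinset_append, Finset.image_union]
    refine .app ((Finset.disjoint_image he).mpr ?_) (iht he) (ihu he)
    exact List.disjoint_toFinset_iff_disjoint.mpr (List.disjoint_of_nodup_append hΓΔ)
  | @lam Γ x t h ih =>
    have hx : x ∉ Γ.toFinset := by simpa using (List.nodup_middle.mp h.nodup).notMem
    refine .lam ?_
    rw [← image_bindEnv_insert hx]
    simpa using ih (bindEnv_injective he x)
  | exch _ ih =>
    rw [List.toFinset_eq_of_perm _ _ ((List.Perm.swap _ _ _).append_left _)]
    exact ih he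

theorem of_isLinear_toDeBruijn {S : Finset ℕ} {t : Term} {e : ℕ → ℕ} (he : e.Injective)
    (h : (t.toDeBruijn e).IsLinear (S.image e)) : Linear S.toList t := by
  induction t generalizing e S with
  | var x =>
    have hS : S = {x} := Finset.image_injective he (by
      rw [DeBruijn.isLinear_var_iff.mp h, Finset.image_singleton])
    simpa [hS] using Linear.var x
  | app t u iht ihu =>
    obtain ⟨A, hA, ht, hu⟩ := DeBruijn.isLinear_app_iff.mp h
    obtain ⟨A, hAS, rfl⟩ := Finset.subset_image_iff.mp hA
    rw [← Finset.image_sdiff _ _ he] at hu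
    have hAS' : A ⊆ S := by exact_mod_cast hAS
    have hperm : (A.toList ++ (S \ A).toList).Perm S.toList := by
      rw [← Multiset.coe_eq_coe, ← Multiset.coe_add, Finset.coe_toList, Finset.coe_toList,
        Finset.coe_toList, Finset.sdiff_val, add_tsub_cancel_of_le (Finset.val_le_iff.mpr hAS')]
    exact (app (iht he ht) (ihu he hu) (hperm.nodup_iff.mpr S.nodup_toList)).perm hperm
  | lam x t ih =>
    rw [Term.toDeBruijn, DeBruijn.isLinear_lam_iff] at h
    -- If `x` were free, its index would be shifted by the binder, but `x` itself is shadowed.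
    have hx : x ∉ S := by
      intro hx
      have hmem : e x + 1 ∈ (DeBruijn.bindIndices (S.image e) : Set ℕ) := by
        simpa [DeBruijn.bindIndices, he.eq_iff] using hx
      obtain ⟨z, hz⟩ := Term.coe_subset_range_of_isLinear_toDeBruijn h hmem
      grind [bindEnv, he.eq_iff]
    rw [← image_bindEnv_insert hx] at h
    exact .lam ((ih (bindEnv_injective he x) h).perm
      ((Finset.toList_insert hx).trans (List.perm_append_singleton _ _).symm))

end Linear

theorem linear_iff_isLinear_toDeBruijn {Γ : List ℕ} {t : Term} {e : ℕ → ℕ} (he : e.Injective) :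
    Linear Γ t ↔ Γ.Nodup ∧ (t.toDeBruijn e).IsLinear (Γ.toFinset.image e) :=
  ⟨fun h => ⟨h.nodup, h.isLinear_toDeBruijn he⟩, fun ⟨hΓ, h⟩ =>
    (Linear.of_isLinear_toDeBruijn he h).perm (List.toFinset_toList hΓ)⟩

/-- The nameless form of a term in the environment of its context. It is a complete invariant of
linear terms up to `Alpha`. -/
def canonicalForm (p : List ℕ × Term) : DeBruijn := p.2.toDeBruijn (contextEnv p.1)

/-- `p` is a linear term in context and `d` is its canonical form. A chain of `AlphaStep`s may pass
through pairs that are not linear, so linearity is made part of the invariant. -/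
def HasCanonicalForm (p : List ℕ × Term) (d : DeBruijn) : Prop :=
  Linear p.1 p.2 ∧ canonicalForm p = d

theorem linear_iff_isLinear_canonicalForm {Γ : List ℕ} {t : Term} :
    Linear Γ t ↔ Γ.Nodup ∧ (canonicalForm (Γ, t)).IsLinear (Finset.range Γ.length) := by
  rw [linear_iff_isLinear_toDeBruijn (contextEnv_injective Γ)]
  exact and_congr_right fun hΓ => by rw [image_contextEnv hΓ, canonicalForm]

theorem canonicalForm_rename {Γ₁ Γ₂ : List ℕ} {x y : ℕ} {t : Term} (hx : x ∉ Γ₁) (hy : y ∉ Γ₁)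
    (ht : y ∉ t.varsList) :
    canonicalForm (Γ₁ ++ y :: Γ₂, t.rename x y) = canonicalForm (Γ₁ ++ x :: Γ₂, t) :=
  (Term.toDeBruijn_rename ht _).trans
    (Term.toDeBruijn_congr fun _ hz => contextEnv_replace hx hy (ne_of_mem_of_not_mem hz ht) Γ₂)

theorem Linear.notMem_of_rename {Γ : List ℕ} {x y : ℕ} {t : Term} (hxy : x ≠ y)
    (hy : y ∉ t.varsList) (h : Linear Γ (t.rename x y)) : x ∉ Γ := by
  intro hx
  have hlin := h.isLinear_toDeBruijn Function.injective_id
  rw [Term.toDeBruijn_rename hy] at hlin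
  obtain ⟨z, hz⟩ := Term.coe_subset_range_of_isLinear_toDeBruijn hlin
    (by simpa using hx : x ∈ ((Γ.toFinset.image id : Finset ℕ) : Set ℕ))
  grind [Function.update_apply]

theorem BoundStep.toDeBruijn_eq {t t' : Term} (h : BoundStep t t') (e : ℕ → ℕ) :
    t.toDeBruijn e = t'.toDeBruijn e := by
  induction h generalizing e with
  | here hy => exact (Term.toDeBruijn_lam_rename hy e).symm
  | appL _ ih => simp only [Term.toDeBruijn, ih]
  | appR _ ih => simp only [Term.toDeBruijn, ih]
  | lam _ ih => simp only [Term.toDeBruijn, ih]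

theorem AlphaStep.hasCanonicalForm_eq {p q : List ℕ × Term} (h : AlphaStep p q) :
    HasCanonicalForm p = HasCanonicalForm q := by
  funext d
  cases h with
  | bound hstep =>
    simp only [HasCanonicalForm, linear_iff_isLinear_canonicalForm, canonicalForm,
      hstep.toDeBruijn_eq]
  | @free Γ₁ Γ₂ x y t ht hy₁ hy₂ =>
    by_cases hx : x ∈ Γ₁ ++ Γ₂
    · have hp : ¬ Linear (Γ₁ ++ x :: Γ₂) t := fun hp => (List.nodup_middle.mp hp.nodup).notMem hx
      have hq : ¬ Linear (Γ₁ ++ y :: Γ₂) (t.rename x y) := fun hq => by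
        have hxy : x ≠ y := by rintro rfl; simp_all
        exact hq.notMem_of_rename hxy ht (by grind)
      simp only [HasCanonicalForm, hp, hq, false_and]
    · have hy : y ∉ Γ₁ ++ Γ₂ := List.not_mem_append hy₁ hy₂
      have hx₁ : x ∉ Γ₁ := fun h => hx (List.mem_append_left _ h)
      simp only [HasCanonicalForm, linear_iff_isLinear_canonicalForm, List.nodup_middle,
        List.nodup_cons, hx, hy, canonicalForm_rename hx₁ hy₁ ht, List.length_append,
        List.length_cons]

theorem Alpha.hasCanonicalForm_eq {p q : List ℕ × Term} (h : Alpha p q) :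
    HasCanonicalForm p = HasCanonicalForm q :=
  congrArg (Quot.lift HasCanonicalForm fun _ _ => AlphaStep.hasCanonicalForm_eq)
    (Quot.eqvGen_sound h)

theorem eqvGen_map {α β : Type*} {r : α → α → Prop} {s : β → β → Prop} {f : α → β}
    (hf : ∀ a b, r a b → s (f a) (f b)) {a b : α} (h : Relation.EqvGen r a b) :
    Relation.EqvGen s (f a) (f b) :=
  Quot.eqvGen_exact (congrArg (Quot.map f hf) (Quot.eqvGen_sound h))

theorem eqvGen_boundStep_of_toDeBruijn_eq {t t' : Term} {e : ℕ → ℕ} (he : e.Injective)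
    (h : t.toDeBruijn e = t'.toDeBruijn e) : Relation.EqvGen BoundStep t t' := by
  -- Induction on the size, since bodies of abstractions are renamed to a common fresh binder.
  induction hn : t.size using Nat.strong_induction_on generalizing t t' e with
  | _ n ih =>
    cases t <;> cases t' <;> simp only [Term.toDeBruijn, reduceCtorEq] at h
    case var.var x y =>
      rw [he (DeBruijn.var.inj h)]
      exact .refl _
    case app.app t u t' u' =>
      obtain ⟨ht, hu⟩ := DeBruijn.app.inj h
      rw [Term.size] at hn
      exact .trans _ _ _
        (eqvGen_map (f := (Term.app · u)) (fun _ _ => .appL) (ih t.size (by omega) he ht rfl))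
        (eqvGen_map (f := (Term.app t' ·)) (fun _ _ => .appR) (ih u.size (by omega) he hu rfl))
    case lam.lam x t x' t' =>
      obtain ⟨z, hz⟩ := Infinite.exists_notMem_finset (t.varsList ++ t'.varsList).toFinset
      simp only [List.mem_toFinset, List.mem_append, not_or] at hz
      obtain ⟨hzt, hzt'⟩ := hz
      have hbody : (t.rename x z).toDeBruijn (bindEnv z e) =
          (t'.rename x' z).toDeBruijn (bindEnv z e) :=
        DeBruijn.lam.inj (((Term.toDeBruijn_lam_rename hzt e).trans h).trans
          (Term.toDeBruijn_lam_rename hzt' e).symm)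
      have hsize : (t.rename x z).size < n := by
        rw [Term.size_rename, ← hn, Term.size]
        omega
      exact .trans _ _ _ (.rel _ _ (.here hzt)) (.trans _ _ _
        (eqvGen_map (f := Term.lam z) (fun _ _ => .lam)
          (ih _ hsize (bindEnv_injective he z) hbody rfl))
        (.symm _ _ (.rel _ _ (.here hzt'))))

theorem exists_alpha_of_fresh {Γ Δ : List ℕ} {t : Term} (Θ : List ℕ) (hlen : Γ.length = Δ.length)
    (hΔ : (Θ ++ Δ).Nodup) (hfresh : ∀ y ∈ Δ, y ∉ Γ ++ t.varsList) :
    ∃ t', Alpha (Θ ++ Γ, t) (Θ ++ Δ, t') := by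
  induction Γ generalizing Δ t Θ with
  | nil => exact ⟨t, by rw [List.length_eq_zero_iff.mp hlen.symm]; exact .refl _⟩
  | cons x Γ ih =>
    obtain _ | ⟨y, Δ⟩ := Δ
    · cases hlen
    have hy : y ∉ Θ ++ Δ := (List.nodup_middle.mp hΔ).notMem
    have hyfresh := hfresh y List.mem_cons_self
    have hfresh' : ∀ w ∈ Δ, w ∉ Γ ++ (t.rename x y).varsList := fun w hw => by
      have hwy : w ≠ y := ne_of_mem_of_not_mem hw fun h => hy (List.mem_append_right _ h)
      have hwt := @Term.varsList_rename_subset x y t w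
      have hwfresh := hfresh w (List.mem_cons_of_mem _ hw)
      grind
    obtain ⟨t', ht'⟩ := ih (Θ ++ [y]) (Nat.succ.inj hlen) (by simpa using hΔ) hfresh'
    simp only [List.append_assoc, List.singleton_append] at ht'
    exact ⟨t', .trans _ _ _ (.rel _ _ (.free (by grind) (by grind) (by grind))) ht'⟩

theorem exists_fresh_list (l : List ℕ) (k : ℕ) :
    ∃ Δ : List ℕ, Δ.length = k ∧ Δ.Nodup ∧ ∀ y ∈ Δ, y ∉ l := by
  obtain ⟨S, hS, rfl⟩ := l.toFinset.finite_toSet.infinite_compl.exists_subset_card_eq k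
  exact ⟨S.toList, S.length_toList, S.nodup_toList, fun y hy => by
    simpa using hS (Finset.mem_toList.mp hy)⟩

theorem HasCanonicalForm.isLinear {p : List ℕ × Term} {d : DeBruijn} (h : HasCanonicalForm p d) :
    d.IsLinear (Finset.range p.1.length) :=
  h.2 ▸ (linear_iff_isLinear_canonicalForm.mp h.1).2

theorem HasCanonicalForm.length_eq {p q : List ℕ × Term} {d : DeBruijn}
    (hp : HasCanonicalForm p d) (hq : HasCanonicalForm q d) : p.1.length = q.1.length := by
  simpa only [Finset.card_range] using congrArg Finset.card (hp.isLinear.unique hq.isLinear)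

theorem HasCanonicalForm.alpha {p q : List ℕ × Term} {d : DeBruijn} (hp : HasCanonicalForm p d)
    (hq : HasCanonicalForm q d) : Alpha p q := by
  have hlen : p.1.length = q.1.length := hp.length_eq hq
  obtain ⟨Δ, hΔlen, hΔ, hfresh⟩ :=
    exists_fresh_list ((p.1 ++ p.2.varsList) ++ (q.1 ++ q.2.varsList)) p.1.length
  obtain ⟨t, ht⟩ := exists_alpha_of_fresh (Γ := p.1) (t := p.2) [] hΔlen.symm hΔ
    fun y hy h => hfresh y hy (List.mem_append_left _ h)
  obtain ⟨u, hu⟩ := exists_alpha_of_fresh (Γ := q.1) (t := q.2) [] (hlen.symm.trans hΔlen.symm) hΔ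
    fun y hy h => hfresh y hy (List.mem_append_right _ h)
  have htd : HasCanonicalForm (Δ, t) d := ht.hasCanonicalForm_eq ▸ hp
  have hud : HasCanonicalForm (Δ, u) d := hu.hasCanonicalForm_eq ▸ hq
  have htu : Relation.EqvGen BoundStep t u :=
    eqvGen_boundStep_of_toDeBruijn_eq (contextEnv_injective Δ) (htd.2.trans hud.2.symm)
  exact .trans _ _ _ ht (.trans _ _ _ (eqvGen_map (fun _ _ => .bound) htu) (.symm _ _ hu))

theorem exists_hasCanonicalForm {d : DeBruijn} {k : ℕ} (h : d.IsLinear (Finset.range k)) :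
    ∃ t, HasCanonicalForm (List.range k, t) d := by
  have hk : (List.range k).toFinset.image (contextEnv (List.range k)) = Finset.range k := by
    rw [image_contextEnv List.nodup_range, List.length_range]
  obtain ⟨t, rfl⟩ := Term.exists_toDeBruijn_eq (hk.symm ▸ h)
  refine ⟨t, linear_iff_isLinear_canonicalForm.mpr ⟨List.nodup_range, ?_⟩, rfl⟩
  rwa [List.length_range]

theorem Alpha.canonicalForm_eq {p q : List ℕ × Term} (hp : Linear p.1 p.2) (h : Alpha p q) :
    canonicalForm p = canonicalForm q := by
  have hq : HasCanonicalForm q (canonicalForm p) := h.hasCanonicalForm_eq ▸ ⟨hp, rfl⟩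
  exact hq.2.symm

theorem canonicalForm_mem_linearTerms {Γ : List ℕ} {t : Term} (h : Linear Γ t) :
    canonicalForm (Γ, t) ∈ DeBruijn.linearTerms t.size (Finset.range Γ.length) :=
  ⟨t.size_toDeBruijn _, HasCanonicalForm.isLinear (p := (Γ, t)) ⟨h, rfl⟩⟩

theorem tnk_eq_linearCount (n k : ℕ) : tnk n k = DeBruijn.linearCount n k := by
  let toClass : {p : List ℕ × Term // Linear p.1 p.2 ∧ p.2.size = n ∧ p.1.length = k} →
      DeBruijn.linearTerms n (Finset.range k) := fun p => ⟨canonicalForm p.1, by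
    obtain ⟨p, hlin, rfl, rfl⟩ := p
    exact canonicalForm_mem_linearTerms hlin⟩
  have hcongr (p q) (h : Alpha p.1 q.1) : toClass p = toClass q :=
    Subtype.ext (h.canonicalForm_eq p.2.1)
  refine (Nat.card_congr (Equiv.ofBijective (Quot.lift toClass hcongr) ⟨?_, ?_⟩)).trans
    (Nat.card_coe_set_eq _)
  · rintro ⟨p, hp, _⟩ ⟨q, hq, _⟩ h
    have hpq : canonicalForm p = canonicalForm q := congrArg Subtype.val h
    exact Quot.sound (HasCanonicalForm.alpha ⟨hp, hpq⟩ ⟨hq, rfl⟩)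
  · rintro ⟨d, hsize, hlin⟩
    obtain ⟨t, ht, rfl⟩ := exists_hasCanonicalForm hlin
    have htn : t.size = n := (t.size_toDeBruijn _).symm.trans hsize
    exact ⟨Quot.mk _ ⟨(List.range k, t), ht, htn, List.length_range⟩, rfl⟩

/-- The counting sequence of linear lambda terms satisfies
`t_{0,k} = [k = 1]` and
`t_{n+1,k} = Σ_{n₁+n₂=n} Σ_{k₁+k₂=k} C(k,k₁)·t_{n₁,k₁}·t_{n₂,k₂} + t_{n,k+1}`
(equivalently, the exponential-type generating function satisfies
`L = x + z·L² + z·∂L/∂x`). -/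
theorem tnk_recurrence :
    (∀ k : ℕ, tnk 0 k = if k = 1 then 1 else 0) ∧
    (∀ n k : ℕ, tnk (n + 1) k =
      (∑ i ∈ Finset.range (n + 1), ∑ j ∈ Finset.range (k + 1),
        Nat.choose k j * tnk i j * tnk (n - i) (k - j)) + tnk n (k + 1)) := by
  refine ⟨fun k => ?_, fun n k => ?_⟩
  · rw [tnk_eq_linearCount, DeBruijn.linearCount_zero]
  · simp only [tnk_eq_linearCount, DeBruijn.linearCount_succ]
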